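/- There exists a universal constant c such that every routing instance in which every path has exactly D edges and whose congestion is at most D admits a schedule with makespan at most c·D and load at most c. -/

import Mathlib

/-- A routing instance: a finite directed multigraph together with packets
`0,…,k-1`, where packet `i` is given a list of edges `path i`. -/
structure RInst where
  V : Type
  E : Type
  [fintE : Fintype E]
  src : E → V
  dst : E → V
  k : ℕ
  path : Fin k → List E

attribute [instance] RInst.fintE

namespace RInst

/-- The paths are directed paths (consecutive edges fit head-to-tail) and
use no edge more than once. -/
def Valid (I : RInst) : Prop :=
  (∀ i, List.Chain' (fun e f => I.dst e = I.src f) (I.path i)) ∧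
  (∀ i, (I.path i).Nodup)

/-- `σ i t` is the number of edges of `path i` traversed by time `t`. -/
def IsSchedule (I : RInst) (σ : Fin I.k → ℕ → ℕ) : Prop :=
  (∀ i, σ i 0 = 0) ∧
  (∀ i t, σ i (t + 1) = σ i t ∨ σ i (t + 1) = σ i t + 1) ∧
  (∀ i t, σ i t ≤ (I.path i).length)

/-- Packet `i` crosses edge `e` in time step `t+1`. -/
def Crosses (I : RInst) (σ : Fin I.k → ℕ → ℕ) (i : Fin I.k) (e : I.E) (t : ℕ) : Prop :=
  σ i (t + 1) = σ i t + 1 ∧ (I.path i)[σ i t]? = some e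

/-- The load of the schedule is at most `c`: in every time step every edge
is crossed by at most `c` packets. -/
def LoadLE (I : RInst) (σ : Fin I.k → ℕ → ℕ) (c : ℕ) : Prop :=
  ∀ (e : I.E) (t : ℕ), Nat.card {i : Fin I.k | I.Crosses σ i e t} ≤ c

/-- All packets have arrived by time `T` (i.e. the makespan is at most `T`). -/
def CompletedBy (I : RInst) (σ : Fin I.k → ℕ → ℕ) (T : ℕ) : Prop :=
  ∀ i, σ i T = (I.path i).length

/-- The congestion: the maximum number of paths using a common edge. -/
noncomputable def congestion (I : RInst) : ℕ :=
  Finset.univ.sup fun e : I.E => Nat.card {i : Fin I.k | e ∈ I.path i}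

/-- The dilation: the maximum length of a path. -/
noncomputable def dilation (I : RInst) : ℕ :=
  Finset.univ.sup fun i : Fin I.k => (I.path i).length

end RInst

/-!
Cut each path, for each level `k = K, …, 1`, into blocks of `width k ^ 2` consecutive positions.
For each of its blocks a packet gets a delay less than `width k`, for which a slot of length
`width k` is reserved. It crosses position `p` at time
`p + ∑ₖ (width k * ⌊p / width k ^ 2⌋ + xₖ)`, `xₖ` being the delay of its block of level `k`
containing `p`. Whatever the delays are, these times increase strictly in `p`, and they are `O(D)`
because `∑ₖ 1 / width k` is bounded and `width K` is comparable to `D`.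

The delays are fixed level by level, from the top. While those of levels at most `k` are still
independent and uniform, the expected load of an edge at time `t` is the sum of `kernel k (t - a)`
over its crossings, `a` being their time without these delays; an extra level `0` that is never
fixed keeps the last of these loads smooth. Since `kernel K ≤ 1 / width K ≤ 1 / D`, the expected
loads are at most `1` at the start. With the delays of level `k + 1` random, the next expected
load of an edge is a sum of independent terms, one for each block, of size at most `1 / width k`,
and its mean is the present expected load. By a Chernoff bound it exceeds `cap (k + 1)` by
`2⁻⁽ᵏ⁺¹⁾` with probability at most `exp (-128 * 4 ^ k)`, whereas the bound on the expected loads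
makes only `O(width (k + 1))` crossings relevant to the load at a given time, so that the
dependency degree is polynomial in `width (k + 1)`. The local lemma therefore provides delays for
which all expected loads are at most `cap k`. At the end the loads averaged over windows of
`width 0 = 4096` steps are at most `cap 0 = 2`, so the loads are at most `8192`.
-/

namespace PacketRouting

open Finset MeasureTheory ProbabilityTheory

/-! ### The local lemma -/

section LocalLemma

variable {Ω α : Type*}

/-- The event that none of the events `A b`, `b ∈ S`, occurs. -/
def avoiding (A : α → Set Ω) (S : Finset α) : Set Ω := ⋂ b ∈ S, (A b)ᶜ

theorem mem_avoiding {A : α → Set Ω} {S : Finset α} {ω : Ω} :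
    ω ∈ avoiding A S ↔ ∀ b ∈ S, ω ∉ A b := by
  simp [avoiding]

theorem avoiding_anti (A : α → Set Ω) : Antitone (avoiding A) := fun _ _ h _ hω =>
  mem_avoiding.2 fun b hb => mem_avoiding.1 hω b (h hb)

theorem avoiding_insert [DecidableEq α] (A : α → Set Ω) (a : α) (S : Finset α) :
    avoiding A (insert a S) = avoiding A S \ A a := by
  ext ω
  simp only [mem_avoiding, forall_mem_insert, Set.mem_sdiff, and_comm]

variable [MeasurableSpace Ω] {μ : Measure Ω} [IsProbabilityMeasure μ] {A : α → Set Ω}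

theorem measureReal_avoiding_le_add_sum [DecidableEq α] (S T : Finset α) :
    μ.real (avoiding A S) ≤
      μ.real (avoiding A (S ∪ T)) + ∑ b ∈ T, μ.real (A b ∩ avoiding A S) := by
  have hcover : avoiding A S ⊆ avoiding A (S ∪ T) ∪ ⋃ b ∈ T, A b ∩ avoiding A S := by
    intro ω hω
    simp only [Set.mem_union, Set.mem_iUnion, Set.mem_inter_iff, mem_avoiding, mem_union] at hω ⊢
    by_contra! h
    obtain ⟨⟨b, hb, hbω⟩, hT⟩ := h
    obtain ⟨c, hc, hcω⟩ := hT b (hb.resolve_left fun hbS => hω b hbS hbω) hbω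
    exact hω c hc hcω
  calc μ.real (avoiding A S)
      ≤ μ.real (avoiding A (S ∪ T) ∪ ⋃ b ∈ T, A b ∩ avoiding A S) := measureReal_mono hcover
    _ ≤ μ.real (avoiding A (S ∪ T)) + μ.real (⋃ b ∈ T, A b ∩ avoiding A S) :=
        measureReal_union_le _ _
    _ ≤ _ := by gcongr; exact measureReal_biUnion_finset_le _ _

variable {N : α → Finset α} {p : ℝ} {d : ℕ}

/-- In terms of conditional probabilities: `P(A a | avoiding A S) ≤ 2 * p`. -/
theorem measureReal_inter_avoiding_le
    (hindep : ∀ a S, Disjoint S (N a) →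
      μ.real (A a ∩ avoiding A S) ≤ μ.real (A a) * μ.real (avoiding A S))
    (hp : ∀ a, μ.real (A a) ≤ p) (hd : ∀ a, #(N a) ≤ d) (hpd : 4 * d * p ≤ 1)
    (S : Finset α) (a : α) :
    μ.real (A a ∩ avoiding A S) ≤ 2 * p * μ.real (avoiding A S) := by
  classical
  induction S using Finset.strongInduction generalizing a with
  | H S ih =>
    have hp0 : 0 ≤ p := measureReal_nonneg.trans (hp a)
    set far := S \ N a
    set near := S ∩ N a
    have hunion : far ∪ near = S := sdiff_union_inter S (N a)
    have hnear : ∀ b ∈ near,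
        μ.real (A b ∩ avoiding A far) ≤ 2 * p * μ.real (avoiding A far) := by
      intro b hb
      refine ih far (sdiff_subset.ssubset_of_mem_notMem (mem_inter.1 hb).1 ?_) b
      exact fun h => (mem_sdiff.1 h).2 (mem_inter.1 hb).2
    have hfar : μ.real (avoiding A far) ≤ 2 * μ.real (avoiding A S) := by
      have hcard : (#near : ℝ) ≤ d := mod_cast (card_le_card inter_subset_right).trans (hd a)
      have hsum : ∑ b ∈ near, μ.real (A b ∩ avoiding A far) ≤ μ.real (avoiding A far) / 2 :=
        calc _ ≤ #near * (2 * p * μ.real (avoiding A far)) := by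
              simpa only [nsmul_eq_mul] using sum_le_card_nsmul _ _ _ hnear
          _ ≤ d * (2 * p * μ.real (avoiding A far)) := by gcongr
          _ = 4 * d * p * (μ.real (avoiding A far) / 2) := by ring
          _ ≤ _ := mul_le_of_le_one_left (by positivity) hpd
      have hunionBound := measureReal_avoiding_le_add_sum (μ := μ) (A := A) far near
      rw [hunion] at hunionBound
      linarith
    calc μ.real (A a ∩ avoiding A S) ≤ μ.real (A a ∩ avoiding A far) :=
          measureReal_mono (Set.inter_subset_inter_right _ (avoiding_anti A sdiff_subset))
      _ ≤ μ.real (A a) * μ.real (avoiding A far) := hindep a far sdiff_disjoint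
      _ ≤ p * (2 * μ.real (avoiding A S)) := by gcongr; exact hp a
      _ = _ := by ring

/-- The symmetric Lovász local lemma, in its lopsided form: an event need not be independent of the
non-neighbouring events, avoiding these must only not make it more likely. -/
theorem lovasz_local_lemma (hA : ∀ a, MeasurableSet (A a))
    (hindep : ∀ a S, Disjoint S (N a) →
      μ.real (A a ∩ avoiding A S) ≤ μ.real (A a) * μ.real (avoiding A S))
    (hp : ∀ a, μ.real (A a) ≤ p) (hd0 : 0 < d) (hd : ∀ a, #(N a) ≤ d) (hpd : 4 * d * p ≤ 1)
    (S : Finset α) : 0 < μ.real (avoiding A S) := by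
  classical
  induction S using Finset.induction_on with
  | empty => simp [avoiding]
  | insert a S _ ih =>
    have hp0 : 0 ≤ p := measureReal_nonneg.trans (hp a)
    have hd1 : (1 : ℝ) ≤ d := mod_cast hd0
    have hp4 : p ≤ 1 / 4 := by linarith [le_mul_of_one_le_left hp0 hd1]
    have hsplit := measureReal_inter_add_sdiff (μ := μ) (s := avoiding A S) (hA a)
    have hcond := measureReal_inter_avoiding_le hindep hp hd hpd S a
    rw [Set.inter_comm] at hcond
    rw [avoiding_insert]
    calc 0 < (1 - 2 * p) * μ.real (avoiding A S) := mul_pos (by linarith) ih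
      _ ≤ μ.real (avoiding A S \ A a) := by linarith

end LocalLemma

section ProductSpace

variable {V β : Type*} [Fintype V] [Finite β] [MeasurableSpace β] [MeasurableSingletonClass β]
  (ν : V → Measure β) [∀ v, IsProbabilityMeasure (ν v)]

theorem measureReal_pi_inter_of_dependsOn {A B : Set (V → β)} {U : Set V}
    (hA : DependsOn (· ∈ A) U) (hB : DependsOn (· ∈ B) Uᶜ) :
    (Measure.pi ν).real (A ∩ B) = (Measure.pi ν).real A * (Measure.pi ν).real B := by
  classical
  have hpreimage : ∀ {C : Set (V → β)} {W : Finset V}, DependsOn (· ∈ C) (W : Set V) →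
      C = (fun ω (v : W) => ω v) ⁻¹' ((fun ω (v : W) => ω v) '' C) := by
    intro C W hC
    refine (Set.subset_preimage_image _ C).antisymm ?_
    rintro ω ⟨ω', hω', heq⟩
    exact (hC fun v hv => congrFun heq ⟨v, hv⟩).mp hω'
  have hindep := (iIndepFun_pi (μ := ν) (X := fun _ => id) fun _ =>
    aemeasurable_id).indepFun_finset U.toFinset Uᶜ.toFinset
      (by simpa only [Set.disjoint_toFinset] using disjoint_compl_right)
      fun v => measurable_pi_apply v
  rw [hpreimage (C := A) (W := U.toFinset) (by simpa only [Set.coe_toFinset]),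
    hpreimage (C := B) (W := Uᶜ.toFinset) (by simpa only [Set.coe_toFinset])]
  simp only [measureReal_def, ← ENNReal.toReal_mul]
  exact congrArg _ (hindep.measure_inter_preimage_eq_mul _ _ (.of_discrete) (.of_discrete))

theorem exists_forall_notMem_of_dependsOn {α : Type*} {A : α → Set (V → β)} {vbl : α → Set V}
    (hA : ∀ a, DependsOn (· ∈ A a) (vbl a)) {N : α → Finset α}
    (hN : ∀ a, ∀ b ∉ N a, Disjoint (vbl a) (vbl b)) {p : ℝ} {d : ℕ}
    (hp : ∀ a, (Measure.pi ν).real (A a) ≤ p) (hd0 : 0 < d) (hd : ∀ a, #(N a) ≤ d)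
    (hpd : 4 * d * p ≤ 1) : ∃ ω, ∀ a, ω ∉ A a := by
  classical
  have := Fintype.ofFinite β
  have hindep : ∀ a S, Disjoint S (N a) → (Measure.pi ν).real (A a ∩ avoiding A S) ≤
      (Measure.pi ν).real (A a) * (Measure.pi ν).real (avoiding A S) := by
    intro a S hS
    refine (measureReal_pi_inter_of_dependsOn ν (hA a) fun ω ω' h => ?_).le
    simp only [mem_avoiding]
    refine propext (forall₂_congr fun b hb => not_congr (iff_of_eq (hA b fun v hv => h v ?_)))
    exact (hN a b (disjoint_left.1 hS hb)).notMem_of_mem_right hv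
  -- Finitely many events already witness the failure of every point of the finite space.
  by_contra! hbad
  choose witness hwitness using hbad
  have hpos := lovasz_local_lemma (fun a => .of_discrete) hindep hp hd0 hd hpd
    (univ.image witness)
  obtain ⟨ω, hω⟩ := nonempty_of_measureReal_ne_zero hpos.ne'
  exact mem_avoiding.1 hω _ (mem_image_of_mem _ (mem_univ ω)) (hwitness ω)

end ProductSpace

/-! ### A Chernoff bound -/

section Chernoff

variable {Ω : Type*} [MeasurableSpace Ω] {μ : Measure Ω} [IsProbabilityMeasure μ] {b r : ℝ}

theorem exp_le_one_add_add_sq {y : ℝ} (h0 : 0 ≤ y) (h1 : y ≤ 1) :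
    Real.exp y ≤ 1 + y + y ^ 2 := by
  linarith [(abs_le.1 (Real.abs_exp_sub_one_sub_id_le (abs_le.2 ⟨by linarith, h1⟩))).2]

theorem mgf_le_exp_of_mem_Icc {X : Ω → ℝ} (hX : Measurable X) (hXb : ∀ ω, X ω ∈ Set.Icc 0 b)
    (hr : 0 ≤ r) (hrb : r * b ≤ 1) :
    mgf X μ r ≤ Real.exp ((r + r ^ 2 * b) * μ[X]) := by
  have hlin : ∀ ω, Real.exp (r * X ω) ≤ 1 + (r + r ^ 2 * b) * X ω := by
    intro ω
    obtain ⟨h0, hb⟩ := hXb ω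
    have hexp := exp_le_one_add_add_sq (mul_nonneg hr h0)
      ((mul_le_mul_of_nonneg_left hb hr).trans hrb)
    have hsq : (r * X ω) ^ 2 ≤ r ^ 2 * b * X ω := by
      calc (r * X ω) ^ 2 = r ^ 2 * X ω * X ω := by ring
        _ ≤ r ^ 2 * b * X ω := by gcongr
    linarith
  have hint : Integrable X μ := .of_mem_Icc 0 b hX.aemeasurable (.of_forall hXb)
  calc mgf X μ r ≤ ∫ ω, 1 + (r + r ^ 2 * b) * X ω ∂μ :=
        integral_mono_of_nonneg (.of_forall fun _ => (Real.exp_pos _).le)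
          ((integrable_const _).add (hint.const_mul _)) (.of_forall hlin)
    _ = (r + r ^ 2 * b) * μ[X] + 1 := by
        rw [integral_add (integrable_const _) (hint.const_mul _), integral_const_mul]
        simp [add_comm]
    _ ≤ _ := Real.add_one_le_exp _

/-- The exponential moment is taken at `η / (2 * b * B)`, which minimises the exponent
`r ^ 2 * b * B - r * η`. -/
theorem measureReal_add_le_sum_le_exp {ι : Type*} [Fintype ι] {X : ι → Ω → ℝ}
    (hindep : iIndepFun X μ) (hX : ∀ i, Measurable (X i)) (hXb : ∀ i ω, X i ω ∈ Set.Icc 0 b)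
    {B η : ℝ} (hmean : ∑ i, μ[X i] ≤ B) (hb : 0 < b) (hB : 0 < B) (hη : 0 ≤ η) (hηB : η ≤ 2 * B) :
    μ.real {ω | B + η ≤ ∑ i, X i ω} ≤ Real.exp (-η ^ 2 / (4 * b * B)) := by
  set r := η / (2 * b * B) with hr
  have hr0 : 0 ≤ r := by positivity
  have hrb : r * b ≤ 1 := by
    rw [hr, div_mul_eq_mul_div, div_le_one (by positivity)]
    nlinarith
  have hmgf : mgf (∑ i, X i) μ r ≤ Real.exp ((r + r ^ 2 * b) * B) := by
    rw [hindep.mgf_sum hX]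
    calc ∏ i, mgf (X i) μ r ≤ ∏ i, Real.exp ((r + r ^ 2 * b) * μ[X i]) :=
          prod_le_prod (fun _ _ => mgf_nonneg) fun i _ =>
            mgf_le_exp_of_mem_Icc (hX i) (hXb i) hr0 hrb
      _ = Real.exp ((r + r ^ 2 * b) * ∑ i, μ[X i]) := by rw [← Real.exp_sum, mul_sum]
      _ ≤ _ := by gcongr
  have hint : Integrable (fun ω => Real.exp (r * (∑ i, X i) ω)) μ :=
    integrable_exp_mul_of_mem_Icc (a := 0) (b := Fintype.card ι * b)
      (Finset.aemeasurable_sum _ fun i _ => (hX i).aemeasurable)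
      (.of_forall fun ω => by
        rw [Finset.sum_apply]
        exact ⟨sum_nonneg fun i _ => (hXb i ω).1,
          by simpa using sum_le_card_nsmul univ _ b fun i _ => (hXb i ω).2⟩)
  calc μ.real {ω | B + η ≤ ∑ i, X i ω} ≤ Real.exp (-r * (B + η)) * mgf (∑ i, X i) μ r := by
        simpa only [Finset.sum_apply] using measure_ge_le_exp_mul_mgf (B + η) hr0 hint
    _ ≤ Real.exp (-r * (B + η)) * Real.exp ((r + r ^ 2 * b) * B) := by gcongr
    _ = Real.exp (-η ^ 2 / (4 * b * B)) := by
        rw [← Real.exp_add, hr]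
        congr 1
        field_simp
        ring

end Chernoff

/-! ### Smoothing by random delays -/

section Smoothing

/-- The law of `Y + Z` for independent `Y`, uniform on `{0, …, w - 1}`, and `Z` with law `φ`. -/
noncomputable def boxAverage (w : ℕ) (φ : ℤ → ℝ) (s : ℤ) : ℝ := (∑ y : Fin w, φ (s - (y : ℕ))) / w

/-- `φ` is the law of a random delay in `{0, …, h - 1}`, given as its mass function on `ℤ`. -/
structure IsDelayLaw (φ : ℤ → ℝ) (h : ℕ) : Prop where
  nonneg : ∀ s, 0 ≤ φ s
  hasSum : HasSum φ 1
  support_subset : φ.support ⊆ Set.Ico 0 (h : ℤ)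

variable {φ : ℤ → ℝ} {w h : ℕ}

theorem isDelayLaw_single : IsDelayLaw (Pi.single 0 1) 1 where
  nonneg := show (0 : ℤ → ℝ) ≤ Pi.single 0 1 from Pi.single_nonneg.2 zero_le_one
  hasSum := hasSum_pi_single 0 1
  support_subset := fun s hs => by
    rw [Set.mem_singleton_iff.1 (Pi.support_single_subset hs)]
    simp

namespace IsDelayLaw

theorem mono (hφ : IsDelayLaw φ h) {h' : ℕ} (hh : h ≤ h') : IsDelayLaw φ h' where
  nonneg := hφ.nonneg
  hasSum := hφ.hasSum
  support_subset := hφ.support_subset.trans (Set.Ico_subset_Ico_right (mod_cast hh))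

theorem eq_zero (hφ : IsDelayLaw φ h) {s : ℤ} (hs : s ∉ Set.Ico 0 (h : ℤ)) : φ s = 0 :=
  Function.notMem_support.1 fun hmem => hs (hφ.support_subset hmem)

protected theorem boxAverage (hφ : IsDelayLaw φ h) (hw : 0 < w) :
    IsDelayLaw (boxAverage w φ) (h + w) where
  nonneg s := div_nonneg (sum_nonneg fun _ _ => hφ.nonneg _) w.cast_nonneg
  hasSum := by
    have hshift : ∀ y : Fin w, HasSum (fun s : ℤ => φ (s - (y : ℕ))) 1 := fun y =>
      (Equiv.subRight ((y : ℕ) : ℤ)).hasSum_iff.2 hφ.hasSum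
    have hw' : (w : ℝ) ≠ 0 := mod_cast hw.ne'
    have hsum := (hasSum_sum fun y (_ : y ∈ univ) => hshift y).div_const (w : ℝ)
    rwa [sum_const, card_univ, Fintype.card_fin, nsmul_one, div_self hw'] at hsum
  support_subset := by
    refine Function.support_subset_iff'.2 fun s hs => ?_
    refine div_eq_zero_iff.2 (.inl (sum_eq_zero fun y _ => hφ.eq_zero ?_))
    have hy := y.2
    simp only [Set.mem_Ico] at hs ⊢
    omega

theorem boxAverage_le (hφ : IsDelayLaw φ h) (w : ℕ) (s : ℤ) :
    boxAverage w φ s ≤ 1 / w := by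
  have hinj : Function.Injective fun y : Fin w => s - (y : ℕ) := fun y y' hy =>
    Fin.ext (by simpa using hy)
  have hsum := sum_le_hasSum (univ.map ⟨_, hinj⟩) (fun s _ => hφ.nonneg s) hφ.hasSum
  rw [sum_map] at hsum
  exact div_le_div_of_nonneg_right hsum w.cast_nonneg

theorem sum_Ico_sub (hφ : IsDelayLaw φ h) {a lo hi : ℤ} (hlo : lo ≤ a) (hhi : a + h ≤ hi) :
    ∑ t ∈ Ico lo hi, φ (t - a) = 1 := by
  refine (hasSum_sum_of_ne_finset_zero fun t ht => hφ.eq_zero ?_).unique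
    ((Equiv.subRight a).hasSum_iff.2 hφ.hasSum)
  simp only [mem_Ico, Set.mem_Ico] at ht ⊢
  omega

end IsDelayLaw

variable {P V E : Type*} [Fintype P]

open Classical in
/-- The expected number of crossings of the edge `e` in time step `t`, when each `p : P` is a
crossing of the edge `edge p` that takes place at time `a p` plus a random delay with law `φ`. -/
noncomputable def smoothedLoad (edge : P → E) (φ : ℤ → ℝ) (a : P → ℤ) (e : E) (t : ℤ) : ℝ :=
  ∑ p with edge p = e, φ (t - a p)

variable {edge : P → E} {a : P → ℤ} {e : E} {t : ℤ}

theorem smoothedLoad_nonneg (hφ : ∀ s, 0 ≤ φ s) : 0 ≤ smoothedLoad edge φ a e t :=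
  sum_nonneg fun _ _ => hφ _

theorem smoothedLoad_le_of_injective (hedge : edge.Injective) {b : ℝ} (hb : 0 ≤ b)
    (hφ : ∀ s, φ s ≤ b) : smoothedLoad edge φ a e t ≤ b := by
  classical
  have hcard : #{p | edge p = e} ≤ 1 := card_le_one.2 fun p hp q hq =>
    hedge ((mem_filter.1 hp).2.trans (mem_filter.1 hq).2.symm)
  calc smoothedLoad edge φ a e t ≤ #{p | edge p = e} • b :=
        sum_le_card_nsmul _ _ b fun p _ => hφ (t - a p)
    _ = #{p | edge p = e} * b := nsmul_eq_mul _ _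
    _ ≤ b := mul_le_of_le_one_left hb (mod_cast hcard)

theorem smoothedLoad_boxAverage (w : ℕ) :
    smoothedLoad edge (boxAverage w φ) a e t =
      (∑ y : Fin w, smoothedLoad edge φ (fun p => a p + (y : ℕ)) e t) / w := by
  simp only [smoothedLoad, boxAverage, ← sum_div, sub_sub]
  rw [sum_comm]

theorem sum_smoothedLoad_prodMk [Fintype V] (g : P → V) (x : V → ℤ) :
    ∑ v, smoothedLoad (fun p => (edge p, g p)) φ (fun p => a p + x v) (e, v) t =
      smoothedLoad edge φ (fun p => a p + x (g p)) e t := by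
  classical
  simp only [smoothedLoad, Prod.mk.injEq, ← filter_filter]
  rw [← sum_fiberwise _ g]
  refine sum_congr rfl fun v _ => sum_congr rfl fun p hp => ?_
  rw [(mem_filter.1 hp).2]

open Classical in
/-- The crossings of the edge `z.1` that a delay less than `h` can move to the time step `z.2`. -/
noncomputable def reaching (edge : P → E) (a : P → ℤ) (h : ℕ) (z : E × ℤ) : Finset P :=
  {p | edge p = z.1 ∧ z.2 - a p ∈ Set.Ico 0 (h : ℤ)}

theorem mem_reaching {p : P} {z : E × ℤ} :
    p ∈ reaching edge a h z ↔ edge p = z.1 ∧ z.2 - a p ∈ Set.Ico 0 (h : ℤ) := by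
  simp [reaching]

/-- Each reaching crossing contributes total mass `1` to the loads of the edge in the `2 * h` time
steps around `t`. -/
theorem card_reaching_le (hφ : IsDelayLaw φ h) {B : ℝ}
    (hload : ∀ t, smoothedLoad edge φ a e t ≤ B) (t : ℤ) :
    (#(reaching edge a h (e, t)) : ℝ) ≤ 2 * h * B := by
  classical
  have hsubset : reaching edge a h (e, t) ⊆ univ.filter (edge · = e) := fun p hp =>
    mem_filter.2 ⟨mem_univ p, (mem_reaching.1 hp).1⟩
  calc (#(reaching edge a h (e, t)) : ℝ)
      = ∑ p ∈ reaching edge a h (e, t), ∑ t' ∈ Ico (t - h) (t + h), φ (t' - a p) := by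
        rw [card_eq_sum_ones, Nat.cast_sum]
        refine sum_congr rfl fun p hp => ?_
        have hp := (mem_reaching.1 hp).2
        simp only [Set.mem_Ico] at hp
        rw [Nat.cast_one, hφ.sum_Ico_sub (by omega) (by omega)]
    _ ≤ ∑ p with edge p = e, ∑ t' ∈ Ico (t - h) (t + h), φ (t' - a p) :=
        sum_le_sum_of_subset_of_nonneg hsubset fun _ _ _ => sum_nonneg fun _ _ => hφ.nonneg _
    _ = ∑ t' ∈ Ico (t - h) (t + h), smoothedLoad edge φ a e t' := sum_comm
    _ ≤ #(Ico (t - h) (t + h)) • B := sum_le_card_nsmul _ _ _ fun t' _ => hload t'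
    _ = 2 * h * B := by
        rw [Int.card_Ico, show t + h - (t - h) = (2 * h : ℕ) by push_cast; ring, Int.toNat_natCast,
          nsmul_eq_mul]
        push_cast
        ring

end Smoothing

/-! ### Fixing one delay per block -/

section FixDelays

variable {P V E : Type*} [Fintype P] {edge : P → E} {g : P → V} {a : P → ℤ} {φ : ℤ → ℝ}
  {w h m : ℕ}

open Classical in
/-- The pairs of an edge and a time step that some crossing can reach which shares its block (its
value under `g`) with a crossing reaching `z`. -/
noncomputable def conflicts (edge : P → E) (g : P → V) (a : P → ℤ) (h : ℕ) (z : E × ℤ) :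
    Finset (E × ℤ) :=
  (reaching edge a h z).biUnion fun p =>
    (({q | g q = g p} : Finset P) ×ˢ range h).image fun q => (edge q.1, a q.1 + (q.2 : ℕ))

theorem mem_conflicts {z z' : E × ℤ} {p q : P} (hp : p ∈ reaching edge a h z)
    (hq : q ∈ reaching edge a h z') (hqp : g q = g p) : z' ∈ conflicts edge g a h z := by
  classical
  obtain ⟨hedge, htime⟩ := mem_reaching.1 hq
  simp only [Set.mem_Ico] at htime
  refine mem_biUnion.2 ⟨p, hp, mem_image.2 ⟨(q, (z'.2 - a q).toNat), ?_, Prod.ext hedge ?_⟩⟩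
  · simp only [mem_product, mem_filter, mem_univ, true_and, mem_range]
    exact ⟨hqp, by omega⟩
  · simp only
    omega

open Classical in
theorem card_conflicts_le (hblock : ∀ v, #{p | g p = v} ≤ m) (z : E × ℤ) :
    #(conflicts edge g a h z) ≤ #(reaching edge a h z) * (m * h) := by
  refine card_biUnion_le_card_mul _ _ _ fun p _ => card_image_le.trans ?_
  rw [card_product, card_range]
  exact Nat.mul_le_mul_right _ (hblock _)

theorem dependsOn_smoothedLoad (hφ : IsDelayLaw φ h) (z : E × ℤ) :
    DependsOn (fun x : V → Fin w => smoothedLoad edge φ (fun p => a p + (x (g p) : ℕ)) z.1 z.2)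
      (g '' reaching edge a (h + w) z) := by
  classical
  intro x y hxy
  refine sum_congr rfl fun p hp => ?_
  by_cases hreach : p ∈ reaching edge a (h + w) z
  · simp only [hxy (g p) ⟨p, hreach, rfl⟩]
  · have hx := (x (g p)).2
    have hy := (y (g p)).2
    simp only [mem_reaching, (mem_filter.1 hp).2, true_and, Set.mem_Ico] at hreach
    rw [hφ.eq_zero, hφ.eq_zero] <;> simp only [Set.mem_Ico] <;> omega

theorem integral_uniformOn_univ {β : Type*} [Fintype β] [MeasurableSpace β]
    [MeasurableSingletonClass β] (f : β → ℝ) :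
    ∫ y, f y ∂uniformOn Set.univ = (∑ y, f y) / Fintype.card β := by
  have hmass : ∀ y : β, (uniformOn (Set.univ : Set β)).real {y} = (Fintype.card β : ℝ)⁻¹ := by
    intro y
    simp [measureReal_def, uniformOn_univ]
  cases isEmpty_or_nonempty β
  · simp [integral_of_isEmpty]
  have := isProbabilityMeasure_uniformOn (Ω := β) Set.finite_univ Set.univ_nonempty
  rw [integral_fintype .of_finite]
  simp only [hmass, smul_eq_mul, inv_mul_eq_div, sum_div]

/-- The uniform distribution of one delay in `{0, …, w - 1}` for each block. -/
noncomputable abbrev uniformDelays (V : Type*) [Fintype V] (w : ℕ) : Measure (V → Fin w) :=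
  Measure.pi fun _ => uniformOn Set.univ

variable {b B η : ℝ}

theorem measureReal_add_le_smoothedLoad_le_exp [Fintype V] [NeZero w]
    (hg : Function.Injective fun p => (edge p, g p)) (hφ0 : ∀ s, 0 ≤ φ s) (hφb : ∀ s, φ s ≤ b)
    {e : E} {t : ℤ} (hload : smoothedLoad edge (boxAverage w φ) a e t ≤ B)
    (hb : 0 < b) (hB : 0 < B) (hη : 0 ≤ η) (hηB : η ≤ 2 * B) :
    (uniformDelays V w).real
        {x | B + η ≤ smoothedLoad edge φ (fun p => a p + (x (g p) : ℕ)) e t} ≤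
      Real.exp (-η ^ 2 / (4 * b * B)) := by
  have := isProbabilityMeasure_uniformOn (Ω := Fin w) Set.finite_univ Set.univ_nonempty
  let blockLoad (v : V) (y : Fin w) : ℝ :=
    smoothedLoad (fun p => (edge p, g p)) φ (fun p => a p + (y : ℕ)) (e, v) t
  have hsum : ∀ x : V → Fin w, ∑ v, blockLoad v (x v) =
      smoothedLoad edge φ (fun p => a p + (x (g p) : ℕ)) e t := fun x =>
    sum_smoothedLoad_prodMk g fun v => ((x v : ℕ) : ℤ)
  have hmean : ∑ v, ∫ x, blockLoad v (x v) ∂uniformDelays V w ≤ B := by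
    refine le_of_eq_of_le ?_ hload
    calc ∑ v, ∫ x, blockLoad v (x v) ∂uniformDelays V w
        = ∑ v, smoothedLoad (fun p => (edge p, g p)) (boxAverage w φ) a (e, v) t := by
          refine sum_congr rfl fun v _ => ?_
          rw [integral_comp_eval .of_discrete, integral_uniformOn_univ, smoothedLoad_boxAverage,
            Fintype.card_fin]
      _ = smoothedLoad edge (boxAverage w φ) a e t := by
          simpa only [add_zero] using sum_smoothedLoad_prodMk (a := a) g fun _ => 0
  have hindep : iIndepFun (fun v (x : V → Fin w) => blockLoad v (x v)) (uniformDelays V w) :=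
    iIndepFun_pi fun _ => measurable_of_finite _ |>.aemeasurable
  have hrange : ∀ v (x : V → Fin w), blockLoad v (x v) ∈ Set.Icc 0 b := fun v x =>
    ⟨smoothedLoad_nonneg hφ0, smoothedLoad_le_of_injective hg hb.le hφb⟩
  simp only [← hsum]
  exact measureReal_add_le_sum_le_exp hindep (fun _ => measurable_of_finite _) hrange hmean hb hB hη
    hηB

open Classical in
theorem exists_delays [Finite V] [NeZero w] (hφ : IsDelayLaw φ h) (hφb : ∀ s, φ s ≤ b)
    (hg : Function.Injective fun p => (edge p, g p)) (hblock : ∀ v, #{p | g p = v} ≤ m)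
    (hload : ∀ e t, smoothedLoad edge (boxAverage w φ) a e t ≤ B)
    (hb : 0 < b) (hB : 0 < B) (hη : 0 ≤ η) (hηB : η ≤ 2 * B) {d : ℕ} (hd0 : 0 < d)
    (hd : 2 * ((h + w : ℕ) : ℝ) * B * (m * (h + w) : ℕ) ≤ d)
    (hfail : 4 * d * Real.exp (-η ^ 2 / (4 * b * B)) ≤ 1) :
    ∃ x : V → Fin w, ∀ e t,
      smoothedLoad edge φ (fun p => a p + (x (g p) : ℕ)) e t ≤ B + η := by
  have := Fintype.ofFinite V
  have := isProbabilityMeasure_uniformOn (Ω := Fin w) Set.finite_univ Set.univ_nonempty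
  have hdegree : ∀ z, #(conflicts edge g a (h + w) z) ≤ d := by
    intro z
    refine (card_conflicts_le hblock z).trans (Nat.cast_le (α := ℝ).1 ?_)
    rw [Nat.cast_mul]
    refine le_trans ?_ hd
    gcongr
    exact card_reaching_le (hφ.boxAverage (NeZero.pos w)) (hload z.1) z.2
  obtain ⟨x, hx⟩ := exists_forall_notMem_of_dependsOn (fun _ : V => uniformOn Set.univ)
    (A := fun z : E × ℤ => {x : V → Fin w |
      B + η ≤ smoothedLoad edge φ (fun p => a p + (x (g p) : ℕ)) z.1 z.2})
    (fun z x y hxy => congrArg (B + η ≤ ·) (dependsOn_smoothedLoad hφ z hxy))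
    (N := conflicts edge g a (h + w))
    (fun z z' hz' => Set.disjoint_left.2 <| by
      rintro _ ⟨p, hp, rfl⟩ ⟨q, hq, hqp⟩
      exact hz' (mem_conflicts hp hq hqp))
    (fun z =>
      measureReal_add_le_smoothedLoad_le_exp hg hφ.nonneg hφb (hload z.1 z.2) hb hB hη hηB)
    hd0 hdegree hfail
  exact ⟨x, fun e t => (not_le.1 (hx (e, t))).le⟩

end FixDelays

/-! ### The hierarchy of levels -/

section Levels

/-- The number of possible delays at level `k`. -/
def width (k : ℕ) : ℕ := 16 ^ (k + 3)

theorem width_pos (k : ℕ) : 0 < width k := Nat.pow_pos (by norm_num)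

theorem width_succ (k : ℕ) : width (k + 1) = 16 * width k := pow_succ' 16 (k + 3)

/-- The law of the sum of independent delays, one uniform on `{0, …, width j - 1}` for each level
`j ≤ k`. -/
noncomputable def kernel : ℕ → ℤ → ℝ
  | 0 => boxAverage (width 0) (Pi.single 0 1)
  | k + 1 => boxAverage (width (k + 1)) (kernel k)

theorem isDelayLaw_kernel (k : ℕ) : IsDelayLaw (kernel k) (2 * width k) := by
  induction k with
  | zero => exact (isDelayLaw_single.boxAverage (width_pos 0)).mono (by have := width_pos 0; omega)
  | succ k ih =>
    refine (ih.boxAverage (width_pos (k + 1))).mono ?_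
    have := width_succ k
    omega

theorem kernel_le (k : ℕ) (s : ℤ) : kernel k s ≤ 1 / width k := by
  cases k with
  | zero => exact isDelayLaw_single.boxAverage_le _ s
  | succ k => exact (isDelayLaw_kernel k).boxAverage_le _ s

theorem kernel_zero_zero : kernel 0 0 = 1 / 4096 := by
  have hsum : ∑ y : Fin (width 0), (Pi.single 0 1 : ℤ → ℝ) (0 - (y : ℕ)) = 1 := by
    rw [Fin.sum_univ_eq_sum_range (fun y => (Pi.single 0 1 : ℤ → ℝ) (0 - (y : ℕ)))]
    simp [Pi.single_apply, width_pos]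
  rw [kernel, boxAverage, hsum]
  norm_num [width]

/-- The bound on the smoothed loads that is maintained while the delays of the levels up to `k` are
still random. -/
noncomputable def cap (k : ℕ) : ℝ := 1 + (1 / 2) ^ k

theorem cap_succ_add (k : ℕ) : cap (k + 1) + (1 / 2) ^ (k + 1) = cap k := by
  simp only [cap, pow_succ]
  ring

theorem one_le_cap (k : ℕ) : 1 ≤ cap k := le_add_of_nonneg_right (by positivity)

theorem cap_le_two (k : ℕ) : cap k ≤ 2 := by
  have : (1 / 2 : ℝ) ^ k ≤ 1 := pow_le_one₀ (by norm_num) (by norm_num)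
  simp only [cap]
  linarith

theorem four_mul_width_pow_le_exp (k : ℕ) :
    4 * ((16 * width (k + 1) ^ 4 : ℕ) : ℝ) ≤ Real.exp (128 * 4 ^ k : ℕ) := by
  have hexponent : 70 + 16 * k ≤ 128 * 4 ^ k := by
    have := (Nat.lt_pow_self (by norm_num : 1 < 4) : k < 4 ^ k)
    omega
  calc 4 * ((16 * width (k + 1) ^ 4 : ℕ) : ℝ) = 2 ^ (70 + 16 * k) := by
        simp only [width, ← pow_mul]
        push_cast
        rw [show (16 : ℝ) = 2 ^ 4 by norm_num, ← pow_mul]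
        ring
    _ ≤ 2 ^ (128 * 4 ^ k) := pow_le_pow_right₀ one_le_two hexponent
    _ ≤ Real.exp 1 ^ (128 * 4 ^ k) := by
        gcongr
        linarith [Real.add_one_le_exp (1 : ℝ)]
    _ = _ := by rw [← Real.exp_nat_mul, mul_one]

/-- The condition of the local lemma at level `k + 1`, for the Chernoff bound with the excess
`(1 / 2) ^ (k + 1)` and summands of size at most `1 / width k`; `16 * width (k + 1) ^ 4` bounds the
number of conflicts. -/
theorem four_mul_width_pow_mul_exp_le_one (k : ℕ) :
    4 * ((16 * width (k + 1) ^ 4 : ℕ) : ℝ) *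
      Real.exp (-((1 / 2) ^ (k + 1)) ^ 2 / (4 * (1 / width k) * cap (k + 1))) ≤ 1 := by
  have hwidth : (0 : ℝ) < width k := mod_cast width_pos k
  have hcap0 := zero_lt_one.trans_le (one_le_cap (k + 1))
  have hexponent : ((128 * 4 ^ k : ℕ) : ℝ) ≤
      ((1 / 2) ^ (k + 1)) ^ 2 / (4 * (1 / width k) * cap (k + 1)) := by
    calc ((128 * 4 ^ k : ℕ) : ℝ) = ((1 / 2) ^ (k + 1)) ^ 2 / (4 * (1 / width k) * 2) := by
          simp only [width]
          push_cast
          rw [one_div, inv_pow]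
          field_simp
          rw [show (16 : ℝ) = 2 ^ 4 by norm_num, show (4 : ℝ) = 2 ^ 2 by norm_num]
          simp only [← pow_mul]
          ring
      _ ≤ _ := by gcongr; exact cap_le_two _
  rw [neg_div]
  calc _ ≤ Real.exp (128 * 4 ^ k : ℕ) * Real.exp (-(128 * 4 ^ k : ℕ)) := by
        gcongr
        exact four_mul_width_pow_le_exp k
    _ = 1 := by rw [← Real.exp_add, add_neg_cancel, Real.exp_zero]

theorem conflict_bound_le_width_pow (k : ℕ) :
    2 * ((2 * width k + width (k + 1) : ℕ) : ℝ) * cap (k + 1) *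
      (width (k + 1) ^ 2 * (2 * width k + width (k + 1)) : ℕ) ≤ (16 * width (k + 1) ^ 4 : ℕ) := by
  calc _ ≤ 2 * ((2 * width k + width (k + 1) : ℕ) : ℝ) * 2 *
        (width (k + 1) ^ 2 * (2 * width k + width (k + 1)) : ℕ) := by
        gcongr
        exact cap_le_two _
    _ = 331776 * (width k : ℝ) ^ 4 := by rw [width_succ]; push_cast; ring
    _ ≤ 1048576 * (width k : ℝ) ^ 4 := by gcongr; norm_num
    _ = _ := by rw [width_succ]; push_cast; ring

open Classical in
theorem exists_level_delays {P V E : Type*} [Fintype P] {edge : P → E} {g : P → V} {a : P → ℤ}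
    {k : ℕ} (hg : Function.Injective fun p => (edge p, g p))
    (hblock : ∀ v, #{p | g p = v} ≤ width (k + 1) ^ 2)
    (hload : ∀ e t, smoothedLoad edge (kernel (k + 1)) a e t ≤ cap (k + 1)) :
    ∃ x : V → ℕ, (∀ v, x v < width (k + 1)) ∧ ∀ e t,
      smoothedLoad edge (kernel k) (fun p => a p + x (g p)) e t ≤ cap k := by
  have hwidth : (0 : ℝ) < width k := mod_cast width_pos k
  have hwidth_succ := width_pos (k + 1)
  have : NeZero (width (k + 1)) := ⟨hwidth_succ.ne'⟩
  have hcap := one_le_cap (k + 1)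
  have hη : ((1 / 2 : ℝ)) ^ (k + 1) ≤ 1 := pow_le_one₀ (by norm_num) (by norm_num)
  have hrange : Function.Injective fun p => (edge p, Set.rangeFactorization g p) := fun p q hpq =>
    hg (Prod.ext (Prod.ext_iff.1 hpq).1 (congrArg Subtype.val (Prod.ext_iff.1 hpq).2))
  obtain ⟨x, hx⟩ := exists_delays (isDelayLaw_kernel k) (kernel_le k) hrange
    (fun v => by simpa only [Subtype.ext_iff, Set.rangeFactorization_coe] using hblock v) hload
    (by positivity) (by linarith) (by positivity) (hη.trans (by linarith)) (by positivity)
    (conflict_bound_le_width_pow k) (four_mul_width_pow_mul_exp_le_one k)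
  refine ⟨fun v => if hv : v ∈ Set.range g then x ⟨v, hv⟩ else 0, fun v => ?_, fun e t => ?_⟩
  · dsimp only
    split_ifs with hv
    exacts [(x ⟨v, hv⟩).2, hwidth_succ]
  · rw [← cap_succ_add]
    simpa only [Set.mem_range_self, dif_pos, Set.rangeFactorization] using hx e t

end Levels

/-! ### Crossing times -/

section CrossingTimes

/-- The time reserved for delays before position `p` of a path: a slot of length `width j` for each
complete block of `width j ^ 2` positions, for each level `1 ≤ j ≤ k`. -/
def drift (k p : ℕ) : ℕ := ∑ j ∈ range k, width (j + 1) * (p / width (j + 1) ^ 2)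

theorem drift_succ (k p : ℕ) :
    drift (k + 1) p = drift k p + width (k + 1) * (p / width (k + 1) ^ 2) :=
  sum_range_succ _ _

/-- Level `j` contributes at most `p / width j`, hence at most `p / 2 ^ j`. -/
theorem drift_le (k p : ℕ) : drift k p ≤ p := by
  have hgeom : 2 ^ k * drift k p + p ≤ 2 ^ k * p := by
    induction k with
    | zero => simp [drift]
    | succ k ih =>
      have hwidth : 2 ^ (k + 1) ≤ width (k + 1) :=
        (Nat.pow_le_pow_left (by norm_num) _).trans (Nat.pow_le_pow_right (by norm_num) (by omega))
      have hlevel : 2 ^ (k + 1) * (width (k + 1) * (p / width (k + 1) ^ 2)) ≤ p := by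
        calc _ ≤ width (k + 1) * (width (k + 1) * (p / width (k + 1) ^ 2)) :=
              Nat.mul_le_mul_right _ hwidth
          _ = width (k + 1) ^ 2 * (p / width (k + 1) ^ 2) := by ring
          _ ≤ p := Nat.mul_div_le _ _
      rw [drift_succ, mul_add]
      rw [pow_succ] at hlevel ⊢
      linarith
  exact Nat.le_of_mul_le_mul_left (by omega) (Nat.two_pow_pos k)

theorem monotone_mul_div_add {w : ℕ} {x : ℕ → ℕ} (hx : ∀ v, x v ≤ w) (q : ℕ) :
    Monotone fun p => w * (p / q) + x (p / q) := by
  have hslot : Monotone fun v => w * v + x v := monotone_nat_of_le_succ fun v => by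
    have := hx v
    rw [mul_add]
    omega
  exact hslot.comp fun _ _ hp => Nat.div_le_div_right hp

variable {ι E : Type*} [Fintype ι] {ℓ : ι → ℕ} {edge : (Σ i, Fin (ℓ i)) → E}

open Classical in
theorem card_block_le {q : ℕ} (hq : 0 < q) (v : ι × ℕ) :
    #{p : Σ i, Fin (ℓ i) | (p.1, (p.2 : ℕ) / q) = v} ≤ q := by
  refine (card_le_card_of_injOn (t := range q) (fun p => (p.2 : ℕ) % q)
    (fun p _ => by simpa using Nat.mod_lt _ hq) ?_).trans (card_range q).le
  rintro ⟨i, p⟩ hp ⟨i', p'⟩ hp' hmod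
  simp only [coe_filter, mem_univ, true_and, Set.mem_ofPred_eq] at hp hp'
  obtain ⟨rfl, hdiv⟩ := Prod.ext_iff.1 (hp.trans hp'.symm)
  exact congrArg _ (Fin.ext (Nat.ext_div_mod hdiv hmod))

theorem exists_strictMono_smoothedLoad_le (hedge : ∀ i, Function.Injective fun p => edge ⟨i, p⟩)
    (k : ℕ) {a : ι → ℕ → ℕ} (ha : ∀ i, StrictMono fun p => (a i p : ℤ) - drift k p)
    (hload : ∀ e t, smoothedLoad edge (kernel k) (fun p => (a p.1 p.2 : ℤ)) e t ≤ cap k) :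
    ∃ τ : ι → ℕ → ℕ, (∀ i, StrictMono (τ i)) ∧ (∀ i p, τ i p ≤ a i p + 2 * width k) ∧
      ∀ e t, smoothedLoad edge (kernel 0) (fun p => (τ p.1 p.2 : ℤ)) e t ≤ cap 0 := by
  induction k generalizing a with
  | zero =>
    refine ⟨a, fun i p q hpq => ?_, fun i p => Nat.le_add_right _ _, hload⟩
    simpa [drift] using ha i hpq
  | succ k ih =>
    set w := width (k + 1) with hw
    have hblocks : Function.Injective fun p => (edge p, (p.1, (p.2 : ℕ) / w ^ 2)) := by
      rintro ⟨i, p⟩ ⟨i', p'⟩ hpp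
      obtain ⟨hpp, hg⟩ := Prod.ext_iff.1 hpp
      obtain rfl : i = i' := (Prod.ext_iff.1 hg).1
      exact congrArg _ (hedge i hpp)
    obtain ⟨x, hxw, hx⟩ := exists_level_delays hblocks
      (fun v => by convert card_block_le (Nat.pow_pos (width_pos (k + 1))) v) hload
    have ha' : ∀ i, StrictMono fun p => ((a i p + x (i, p / w ^ 2) : ℕ) : ℤ) - drift k p := by
      intro i p q hpq
      -- At a block boundary the reserved slot of length `w` absorbs the change of delay.
      have hslot := monotone_mul_div_add (fun v => (hxw (i, v)).le) (w ^ 2) hpq.le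
      have hdrift := ha i hpq
      simp only [drift_succ, ← hw] at hslot hdrift ⊢
      omega
    obtain ⟨τ, hmono, hbound, hτ⟩ := ih ha' (by simpa only [Nat.cast_add] using hx)
    refine ⟨τ, hmono, fun i p => (hbound i p).trans ?_, hτ⟩
    have := hxw (i, p / w ^ 2)
    have := width_succ k
    omega

theorem le_width_log (D : ℕ) : D ≤ width (Nat.log 16 D) :=
  (Nat.lt_pow_succ_log_self (by norm_num) D).le.trans
    (Nat.pow_le_pow_right (by norm_num) (by omega))

theorem width_log_le {D : ℕ} (hD : D ≠ 0) : width (Nat.log 16 D) ≤ 4096 * D := by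
  have := Nat.pow_log_le_self 16 hD
  rw [width, pow_add]
  omega

open Classical in
theorem smoothedLoad_kernel_le_one {P : Type*} [Fintype P] {edge : P → E} {k : ℕ}
    (hcong : ∀ e, #{p | edge p = e} ≤ width k) (a : P → ℤ) (e : E) (t : ℤ) :
    smoothedLoad edge (kernel k) a e t ≤ 1 := by
  have hwidth : (0 : ℝ) < width k := mod_cast width_pos k
  calc smoothedLoad edge (kernel k) a e t ≤ #{p | edge p = e} • (1 / (width k : ℝ)) :=
        sum_le_card_nsmul _ _ _ fun p _ => kernel_le k _
    _ = #{p | edge p = e} / (width k : ℝ) := by rw [nsmul_eq_mul, mul_one_div]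
    _ ≤ 1 := (div_le_one hwidth).2 (mod_cast hcong e)

open Classical in
theorem card_le_of_smoothedLoad_kernel_zero_le {P : Type*} [Fintype P] {edge : P → E}
    {τ : P → ℕ} {e : E} {t : ℕ} (hload : smoothedLoad edge (kernel 0) (fun p => τ p) e t ≤ 2) :
    #{p | edge p = e ∧ τ p = t} ≤ 8192 := by
  have hcard : (#{p | edge p = e ∧ τ p = t} : ℝ) * (1 / 4096) ≤ 2 := by
    calc (#{p | edge p = e ∧ τ p = t} : ℝ) * (1 / 4096)
        = ∑ p with edge p = e ∧ τ p = t, kernel 0 (t - τ p) := by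
          rw [← nsmul_eq_mul, ← sum_const]
          refine sum_congr rfl fun p hp => ?_
          rw [(mem_filter.1 hp).2.2, sub_self, kernel_zero_zero]
      _ ≤ smoothedLoad edge (kernel 0) (fun p => τ p) e t :=
          sum_le_sum_of_subset_of_nonneg
            (monotone_filter_right _ fun _ _ hp => hp.1)
            fun _ _ _ => (isDelayLaw_kernel 0).nonneg _
      _ ≤ 2 := hload
  exact_mod_cast (show (#{p | edge p = e ∧ τ p = t} : ℝ) ≤ 8192 by linarith)

open Classical in
theorem exists_strictMono_card_le (hedge : ∀ i, Function.Injective fun p => edge ⟨i, p⟩) {D : ℕ}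
    (hcong : ∀ e, #{p | edge p = e} ≤ D) :
    ∃ τ : ι → ℕ → ℕ, (∀ i, StrictMono (τ i)) ∧ (∀ i, ∀ p < D, τ i p < 8194 * D) ∧
      ∀ e t, #{p | edge p = e ∧ τ p.1 p.2 = t} ≤ 8192 := by
  set K := Nat.log 16 D with hK
  have hstart : ∀ _ : ι, StrictMono fun p => ((p + drift K p : ℕ) : ℤ) - drift K p := by
    intro _ p q hpq
    simpa using hpq
  obtain ⟨τ, hmono, hbound, hload⟩ := exists_strictMono_smoothedLoad_le hedge K hstart fun e t =>
    (smoothedLoad_kernel_le_one (fun e => (hcong e).trans (le_width_log D)) _ e t).trans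
      (one_le_cap K)
  refine ⟨τ, hmono, fun i p hp => ?_, fun e t =>
    card_le_of_smoothedLoad_kernel_zero_le ((hload e t).trans (cap_le_two 0))⟩
  have := hbound i p
  have := drift_le K p
  have := width_log_le (Nat.ne_zero_of_lt hp)
  rw [← hK] at this
  omega

end CrossingTimes

/-! ### From crossing times to schedules -/

section Crossed

/-- The number of positions of a path of length `ℓ` crossed before time `t`, when position `p` is
crossed at time `τ p`. -/
def crossed (τ : ℕ → ℕ) (ℓ t : ℕ) : ℕ := #{p ∈ range ℓ | τ p < t}

variable {τ : ℕ → ℕ} {ℓ t : ℕ}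

theorem crossed_le (τ : ℕ → ℕ) (ℓ t : ℕ) : crossed τ ℓ t ≤ ℓ :=
  (card_filter_le _ _).trans (card_range ℓ).le

theorem crossed_zero (τ : ℕ → ℕ) (ℓ : ℕ) : crossed τ ℓ 0 = 0 := by simp [crossed]

theorem crossed_eq_of_forall_lt (hτ : ∀ p < ℓ, τ p < t) : crossed τ ℓ t = ℓ := by
  rw [crossed, filter_true_of_mem fun p hp => hτ p (mem_range.1 hp), card_range]

theorem lt_crossed_iff (hτ : StrictMono τ) {q : ℕ} : q < crossed τ ℓ t ↔ q < ℓ ∧ τ q < t := by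
  constructor
  · contrapose!
    intro hq
    refine (card_le_card fun p hp => ?_).trans (card_range q).le
    obtain ⟨hpℓ, hpt⟩ := mem_filter.1 hp
    by_contra hpq
    have hqp : q ≤ p := not_lt.1 fun h => hpq (mem_range.2 h)
    exact ((hq (hqp.trans_lt (mem_range.1 hpℓ))).trans (hτ.monotone hqp)).not_gt hpt
  · rintro ⟨hqℓ, hqt⟩
    refine (card_range (q + 1)).ge.trans (card_le_card fun p hp => ?_)
    have hpq : p ≤ q := Nat.lt_succ_iff.1 (mem_range.1 hp)
    exact mem_filter.2 ⟨mem_range.2 (hpq.trans_lt hqℓ), (hτ.monotone hpq).trans_lt hqt⟩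

theorem crossed_succ (hτ : StrictMono τ) (ℓ t : ℕ) :
    crossed τ ℓ (t + 1) = crossed τ ℓ t ∨ crossed τ ℓ (t + 1) = crossed τ ℓ t + 1 := by
  have hle : crossed τ ℓ t ≤ crossed τ ℓ (t + 1) :=
    card_le_card (monotone_filter_right _ fun _ _ hp => Nat.lt_succ_of_lt hp)
  have hge : ¬ crossed τ ℓ t + 1 < crossed τ ℓ (t + 1) := by
    intro h
    obtain ⟨hℓ, ht⟩ := (lt_crossed_iff hτ).1 h
    have hlt := hτ (Nat.lt_add_one (crossed τ ℓ t))
    exact lt_irrefl (crossed τ ℓ t)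
      ((lt_crossed_iff hτ).2 ⟨(Nat.lt_add_one _).trans hℓ, hlt.trans_le (Nat.lt_succ_iff.1 ht)⟩)
  omega

theorem apply_crossed_eq (hτ : StrictMono τ) (h : crossed τ ℓ (t + 1) = crossed τ ℓ t + 1) :
    crossed τ ℓ t < ℓ ∧ τ (crossed τ ℓ t) = t := by
  obtain ⟨hℓ, hlt⟩ := (lt_crossed_iff hτ).1 (h.symm ▸ Nat.lt_add_one (crossed τ ℓ t))
  have hge : t ≤ τ (crossed τ ℓ t) :=
    not_lt.1 fun ht => lt_irrefl _ ((lt_crossed_iff hτ).2 ⟨hℓ, ht⟩)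
  exact ⟨hℓ, (Nat.lt_succ_iff.1 hlt).antisymm hge⟩

end Crossed

end PacketRouting

namespace RInst

open Finset PacketRouting

variable (I : RInst)

/-- A position on the path of one of the packets. -/
abbrev Position : Type := Σ i : Fin I.k, Fin (I.path i).length

/-- The edge at a position. -/
def edgeAt (p : I.Position) : I.E := (I.path p.1).get p.2

/-- The schedule in which packet `i` crosses its edge at position `p` in time step `τ i p + 1`, if
`τ i` is strictly increasing. -/
def scheduleOf (τ : Fin I.k → ℕ → ℕ) (i : Fin I.k) (t : ℕ) : ℕ :=
  crossed (τ i) (I.path i).length t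

variable {I}

theorem edgeAt_injective {i : Fin I.k} (hi : (I.path i).Nodup) :
    Function.Injective fun p => I.edgeAt ⟨i, p⟩ :=
  List.nodup_iff_injective_get.1 hi

open Classical in
theorem card_edgeAt_eq_le_congestion (hI : ∀ i, (I.path i).Nodup) (e : I.E) :
    #{p : I.Position | I.edgeAt p = e} ≤ I.congestion := by
  refine le_trans ?_ (le_sup (f := fun e : I.E => Nat.card {i : Fin I.k | e ∈ I.path i})
    (mem_univ e))
  rw [Nat.card_eq_fintype_card, Fintype.card_subtype]
  refine card_le_card_of_injOn Sigma.fst (fun p hp => ?_) ?_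
  · simp only [coe_filter, mem_univ, true_and, Set.mem_ofPred_eq] at hp ⊢
    exact hp ▸ List.get_mem _ _
  · rintro ⟨i, p⟩ hp ⟨_, p'⟩ hp' rfl
    simp only [coe_filter, mem_univ, true_and, Set.mem_ofPred_eq] at hp hp'
    exact congrArg _ (edgeAt_injective (hI i) (hp.trans hp'.symm))

variable {τ : Fin I.k → ℕ → ℕ}

theorem isSchedule_scheduleOf (hτ : ∀ i, StrictMono (τ i)) : I.IsSchedule (I.scheduleOf τ) :=
  ⟨fun _ => crossed_zero _ _, fun i t => crossed_succ (hτ i) _ t, fun _ _ => crossed_le _ _ _⟩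

open Classical in
theorem loadLE_scheduleOf (hτ : ∀ i, StrictMono (τ i)) {c : ℕ}
    (hload : ∀ e t, #{p : I.Position | I.edgeAt p = e ∧ τ p.1 p.2 = t} ≤ c) :
    I.LoadLE (I.scheduleOf τ) c := by
  intro e t
  refine le_trans ?_ (hload e t)
  rw [Nat.card_eq_fintype_card, Fintype.card_subtype]
  refine (card_le_card (t := ({p : I.Position | I.edgeAt p = e ∧ τ p.1 p.2 = t} :
    Finset I.Position).image Sigma.fst) fun i hi => ?_).trans card_image_le
  obtain ⟨hstep, hedge⟩ := (mem_filter.1 hi).2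
  obtain ⟨hlt, htime⟩ := apply_crossed_eq (hτ i) hstep
  exact mem_image.2 ⟨⟨i, _, hlt⟩,
    mem_filter.2 ⟨mem_univ _, (List.getElem?_eq_some_iff.1 hedge).2, htime⟩, rfl⟩

theorem completedBy_scheduleOf {T : ℕ} (hτ : ∀ i, ∀ p < (I.path i).length, τ i p < T) :
    I.CompletedBy (I.scheduleOf τ) T := fun i =>
  crossed_eq_of_forall_lt (hτ i)

end RInst

theorem exists_schedule_load_const_makespan_const_D_general :
    ∃ c : ℕ, ∀ (I : RInst) (D : ℕ), (∀ i, (I.path i).Nodup) →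
      I.dilation ≤ D → I.congestion ≤ D →
      ∃ σ : Fin I.k → ℕ → ℕ, I.IsSchedule σ ∧ I.LoadLE σ c ∧
        I.CompletedBy σ (c * D) := by
  refine ⟨8194, fun I D hI hdil hcong => ?_⟩
  obtain ⟨τ, hmono, hτD, hload⟩ := PacketRouting.exists_strictMono_card_le
    (fun i => RInst.edgeAt_injective (hI i))
    fun e => (RInst.card_edgeAt_eq_le_congestion hI e).trans hcong
  have hlength : ∀ i, (I.path i).length ≤ D := fun i =>
    (Finset.le_sup (f := fun i => (I.path i).length) (Finset.mem_univ i)).trans hdil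
  exact ⟨I.scheduleOf τ, RInst.isSchedule_scheduleOf hmono,
    RInst.loadLE_scheduleOf hmono fun e t => (hload e t).trans (by norm_num),
    RInst.completedBy_scheduleOf fun i p hp => hτD i p (hp.trans_le (hlength i))⟩

/-- There is a universal constant `c` such that every routing
instance in which every path has exactly `D` edges and whose congestion is at
most `D` admits a schedule with makespan at most `c·D` and load at most `c`. -/
theorem exists_schedule_load_const_makespan_const_D :
    ∃ c : ℕ, ∀ (I : RInst) (D : ℕ), I.Valid →
      (∀ i, (I.path i).length = D) → I.congestion ≤ D →
      ∃ σ : Fin I.k → ℕ → ℕ, I.IsSchedule σ ∧ I.LoadLE σ c ∧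
        I.CompletedBy σ (c * D) :=
  exists_schedule_load_const_makespan_const_D_general.imp fun _ h I D hI hlength =>
    h I D hI.2 (Finset.sup_le fun i _ => (hlength i).le)
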